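/- arXiv:1807.03650 — 2 statements merged into one kernel-verified Lean document; each statement's English description precedes it below -/
import Mathlib

section
/- Consider a sequence of M-layer models indexed by M on a fixed finite simple graph G = (V,E), with parameters satisfying p_ℓ(M) M^{α_ℓ} → c_ℓ > 0 for each link ℓ and q_i(M) M^{β_i} → d_i > 0 for each node i, where α_ℓ ≥ 0 and β_i ≥ 0. For each link ℓ = (i,j) define λ_ℓ = 0 if α_ℓ + β_i + β_j > 1, λ_ℓ = c_ℓ d_i d_j if α_ℓ + β_i + β_j = 1, and λ_ℓ = +∞ if α_ℓ + β_i + β_j < 1. Assume that for every node k, if at least two links ℓ = (k,i) incident to k satisfy α_ℓ + β_k + β_i = 1, then β_k < 1. Then the link multiplicities {W_ℓ : ℓ ∈ E} are asymptotically independent with Poisson limits: for every (w_ℓ)_{ℓ∈E} ∈ ℕ^E, lim_{M→∞} P[W_ℓ = w_ℓ for all ℓ ∈ E] = ∏_{ℓ∈E} π(w_ℓ; λ_ℓ), where π(w;λ) = λ^w e^{−λ}/w! for λ ∈ (0,∞), π(w;0) = 1 if w = 0 and 0 otherwise, and π(w;∞) = 0 for all w ∈ ℕ. -/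
open MeasureTheory Filter Finset

open scoped Classical

/-- Bernoulli measure on `Bool` with success probability `p`. -/
noncomputable def bern (p : ℝ) : Measure Bool :=
  ENNReal.ofReal p • Measure.dirac true + ENNReal.ofReal (1 - p) • Measure.dirac false

/-- The `M`-layer model: mutually independent Bernoulli variables `Y_{m,ℓ}` (link
thinning, probability `p ℓ`) and `Z_{m,i}` (node activation, probability `q i`). -/
noncomputable def netμ (V : Type) [Fintype V] (M : ℕ) (p : V × V → ℝ) (q : V → ℝ) :
    Measure (((Fin M × (V × V)) ⊕ (Fin M × V)) → Bool) :=
  Measure.pi fun k =>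
    bern (Sum.elim (fun a : Fin M × (V × V) => p a.2) (fun a : Fin M × V => q a.2) k)

/-- Link `ℓ = (i,j)` exists on layer `m`: `Y_{m,ℓ} = Z_{m,i} = Z_{m,j} = 1`. -/
def exOn {V : Type} {M : ℕ} (m : Fin M) (ℓ : V × V)
    (ω : ((Fin M × (V × V)) ⊕ (Fin M × V)) → Bool) : Prop :=
  ω (Sum.inl (m, ℓ)) = true ∧ ω (Sum.inr (m, ℓ.1)) = true ∧ ω (Sum.inr (m, ℓ.2)) = true

/-- `W_ℓ`: the number of layers on which link `ℓ` exists. -/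
noncomputable def Wnum {V : Type} {M : ℕ} (ℓ : V × V)
    (ω : ((Fin M × (V × V)) ⊕ (Fin M × V)) → Bool) : ℕ :=
  (Finset.univ.filter fun m : Fin M => exOn m ℓ ω).card

/-- The multinomial formula for independent classified trials. -/
theorem sum_filter_fiber_card_prod {Ω τ : Type*} [Fintype Ω] [Fintype τ] [DecidableEq τ]
    (g : Ω → ℝ) (h : Ω → τ) (M : ℕ) (d : τ →₀ ℕ) :
    ∑ η : Fin M → Ω with (∀ x, #{m | h (η m) = x} = d x), ∏ m, g (η m) =
      if d.sum (fun _ k => k) = M then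
        (d.multinomial : ℝ) * d.prod (fun x k => (∑ o with h o = x, g o) ^ k) else 0 := by
  rw [← MvPolynomial.coeff_linearCombination_X_pow_of_fintype]
  have hsum : ∑ x, (∑ o with h o = x, g o) • (MvPolynomial.X x : MvPolynomial τ ℝ) =
      ∑ o, MvPolynomial.monomial (Finsupp.single (h o) 1) (g o) := by
    rw [← Finset.sum_fiberwise univ h]
    refine Finset.sum_congr rfl fun x _ => ?_
    rw [Finset.sum_smul]
    refine Finset.sum_congr rfl fun o ho => ?_
    rw [(Finset.mem_filter.1 ho).2, MvPolynomial.smul_eq_C_mul, MvPolynomial.C_mul_X_eq_monomial]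
  rw [hsum, Fintype.sum_pow, MvPolynomial.coeff_sum, Finset.sum_filter]
  refine Finset.sum_congr rfl fun η _ => ?_
  have hprod : ∏ m, MvPolynomial.monomial (Finsupp.single (h (η m)) 1) (g (η m)) =
      MvPolynomial.monomial (∑ m, Finsupp.single (h (η m)) 1) (∏ m, g (η m)) :=
    MvPolynomial.monomial_sum_prod _ _ _ |>.symm
  rw [hprod, MvPolynomial.coeff_monomial]
  congr 1
  simp [Finsupp.ext_iff, Finsupp.finsetSum_apply, Finsupp.single_apply]

/-- Multinomial coefficient of `w` completed by a remaining class of size `M - ∑ w`. -/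
theorem multinomial_option {ι : Type*} [Fintype ι] (w : ι → ℕ) (M : ℕ) (hM : ∑ l, w l ≤ M)
    (d : Option ι →₀ ℕ) (hnone : d none = M - ∑ l, w l) (hsome : ∀ l, d (some l) = w l) :
    (d.multinomial : ℝ) = M.descFactorial (∑ l, w l) / ∏ l, ((w l).factorial : ℝ) := by
  rw [Finsupp.multinomial_eq_of_support_subset (Finset.subset_univ d.support)]
  have h := Nat.multinomial_spec univ d
  simp only [Fintype.prod_option, Fintype.sum_option, hnone, hsome, Nat.sub_add_cancel hM] at h
  rw [← Nat.factorial_mul_descFactorial hM, mul_assoc] at h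
  have h' := Nat.eq_of_mul_eq_mul_left (Nat.factorial_pos _) h
  rw [eq_div_iff (Finset.prod_ne_zero_iff.2 fun l _ => by positivity), mul_comm]
  exact_mod_cast h'

theorem sum_filter_card_some_prod {Ω ι : Type*} [Fintype Ω] [Fintype ι] [DecidableEq ι]
    (g : Ω → ℝ) (h : Ω → Option ι) (w : ι → ℕ) (M : ℕ) (hM : ∑ l, w l ≤ M) :
    ∑ η : Fin M → Ω with (∀ l, #{m | h (η m) = some l} = w l), ∏ m, g (η m) =
      M.descFactorial (∑ l, w l) / (∏ l, ((w l).factorial : ℝ)) *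
        ((∑ o with h o = none, g o) ^ (M - ∑ l, w l) *
          ∏ l, (∑ o with h o = some l, g o) ^ w l) := by
  set d : Option ι →₀ ℕ := Finsupp.equivFunOnFinite.symm
    (fun x => x.elim (M - ∑ l, w l) w) with hd
  have hnone : d none = M - ∑ l, w l := rfl
  have hsome : ∀ l, d (some l) = w l := fun _ => rfl
  have key := sum_filter_fiber_card_prod g h M d
  rw [if_pos, multinomial_option w M hM d hnone hsome,
    d.prod_fintype _ (fun _ => pow_zero _), Fintype.prod_option, hnone] at key
  · simp only [hsome] at key
    rw [← key]
    refine Finset.sum_congr (Finset.filter_congr fun η _ => ?_) fun _ _ => rfl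
    rw [Option.forall]
    refine ⟨fun H => ⟨?_, H⟩, fun H => H.2⟩
    have hcard := Finset.card_eq_sum_card_fiberwise (s := (univ : Finset (Fin M)))
      (t := univ) (f := fun m => h (η m)) (fun _ _ => Finset.mem_coe.2 (Finset.mem_univ _))
    rw [Fintype.sum_option, Finset.card_univ, Fintype.card_fin] at hcard
    simp only [H] at hcard
    rw [hnone]
    omega
  · rw [d.sum_fintype _ (fun _ => rfl), Fintype.sum_option, hnone]
    simp only [hsome]
    omega

theorem tendsto_multinomial_poisson {ι : Type*} [Fintype ι] (w : ι → ℕ) (r : ι → ℝ)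
    (s₀ : ℕ → ℝ) (s : ι → ℕ → ℝ) (hs : ∀ l, Tendsto (fun M : ℕ => M * s l M) atTop (nhds (r l)))
    (hs₀ : Tendsto (fun M : ℕ => M * (1 - s₀ M)) atTop (nhds (∑ l, r l))) :
    Tendsto (fun M : ℕ => M.descFactorial (∑ l, w l) / (∏ l, ((w l).factorial : ℝ)) *
        (s₀ M ^ (M - ∑ l, w l) * ∏ l, s l M ^ w l)) atTop
      (nhds (∏ l, (r l ^ w l * Real.exp (-r l) / ((w l).factorial : ℝ)))) := by
  set n := ∑ l, w l with hn
  have hdesc : Tendsto (fun M : ℕ => (M.descFactorial n : ℝ) / (M : ℝ) ^ n) atTop (nhds 1) := by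
    refine (Asymptotics.isEquivalent_iff_tendsto_one ?_).1 (isEquivalent_descFactorial n)
    filter_upwards [eventually_gt_atTop 0] with M hM
    positivity
  have hsub : Tendsto (fun M => 1 - s₀ M) atTop (nhds 0) :=
    ProbabilityTheory.tendsto_zero_of_tendsto_mul_atTop hs₀
  have hone : Tendsto s₀ atTop (nhds 1) := by
    simpa using (tendsto_const_nhds (x := (1 : ℝ))).sub hsub
  have hexp : Tendsto (fun M => s₀ M ^ M) atTop (nhds (Real.exp (-∑ l, r l))) := by
    have := Real.tendsto_one_add_pow_exp_of_tendsto (g := fun M => s₀ M - 1)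
      (t := -∑ l, r l) (by simpa [← mul_neg] using hs₀.neg)
    simpa using this
  have hpow : Tendsto (fun M : ℕ => ∏ l, ((M : ℝ) * s l M) ^ w l) atTop (nhds (∏ l, r l ^ w l)) :=
    tendsto_finsetProd _ fun l _ => (hs l).pow (w l)
  have hlim := ((hdesc.mul (hexp.mul ((hone.pow n).inv₀ (by simp)))).mul hpow).div_const
    (∏ l, ((w l).factorial : ℝ))
  have hval : ∏ l, (r l ^ w l * Real.exp (-r l) / ((w l).factorial : ℝ)) =
      1 * (Real.exp (-∑ l, r l) * (1 ^ n)⁻¹) * (∏ l, r l ^ w l) / ∏ l, ((w l).factorial : ℝ) := by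
    rw [Finset.prod_div_distrib, Finset.prod_mul_distrib, ← Real.exp_sum, Finset.sum_neg_distrib]
    simp [mul_comm]
  rw [hval]
  refine hlim.congr' ?_
  filter_upwards [eventually_gt_atTop 0, eventually_ge_atTop n,
    hone.eventually_ne one_ne_zero] with M hM hMn hne
  have hM' : (M : ℝ) ≠ 0 := by positivity
  rw [pow_sub₀ _ hne hMn]
  simp only [mul_pow, Finset.prod_mul_distrib, Finset.prod_pow_eq_pow_sum, ← hn]
  field_simp

/-- The mass, under `M` independent layers of mass function `g`, of the sequences in which each
`A l` holds on exactly `w l` layers. -/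
noncomputable def layerSum {Ω ι : Type*} [Fintype Ω] (A : ι → Ω → Prop) (w : ι → ℕ) (M : ℕ)
    (g : Ω → ℝ) : ℝ :=
  ∑ η : Fin M → Ω with (∀ l, #{m | A l (η m)} = w l), ∏ m, g (η m)

theorem layerSum_sub_le {Ω ι : Type*} [Fintype Ω] (A : ι → Ω → Prop) (w : ι → ℕ) (M : ℕ)
    (g g' : Ω → ℝ) (h0 : ∀ o, 0 ≤ g' o) (hle : ∀ o, g' o ≤ g o) :
    layerSum A w M g - layerSum A w M g' ≤ (∑ o, g o) ^ M - (∑ o, g' o) ^ M := by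
  rw [layerSum, layerSum, Fintype.sum_pow, Fintype.sum_pow, ← Finset.sum_sub_distrib,
    ← Finset.sum_sub_distrib]
  refine Finset.sum_le_sum_of_subset_of_nonneg (Finset.filter_subset _ _) fun η _ _ => ?_
  exact sub_nonneg.2 (Finset.prod_le_prod (fun _ _ => h0 _) fun _ _ => hle _)

theorem layerSum_mono {Ω ι : Type*} [Fintype Ω] (A : ι → Ω → Prop) (w : ι → ℕ) (M : ℕ)
    (g g' : Ω → ℝ) (h0 : ∀ o, 0 ≤ g' o) (hle : ∀ o, g' o ≤ g o) :
    layerSum A w M g' ≤ layerSum A w M g :=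
  Finset.sum_le_sum fun _ _ => Finset.prod_le_prod (fun _ _ => h0 _) fun _ _ => hle _

theorem layerSum_le_two_pow_mul_exp {Ω ι : Type*} [Fintype Ω] (A : ι → Ω → Prop) (w : ι → ℕ)
    (M : ℕ) (g : Ω → ℝ) (h0 : ∀ o, 0 ≤ g o) (h1 : ∑ o, g o = 1) (l : ι) :
    layerSum A w M g ≤ 2 ^ w l * Real.exp (-(M * ∑ o with A l o, g o) / 2) := by
  have hstep : layerSum A w M g ≤
      2 ^ w l * ∑ η : Fin M → Ω, ∏ m, (g (η m) * if A l (η m) then 1 / 2 else 1) := by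
    rw [Finset.mul_sum, layerSum]
    refine (Finset.sum_le_sum (fun η hη => ?_)).trans
      (Finset.sum_le_sum_of_subset_of_nonneg (Finset.filter_subset _ _) fun η _ _ => ?_)
    · rw [Finset.prod_mul_distrib, Finset.prod_ite, Finset.prod_const, Finset.prod_const_one,
        (Finset.mem_filter.1 hη).2 l]
      simp only [one_div, inv_pow, mul_one]
      apply le_of_eq
      field_simp
    · refine mul_nonneg (by positivity) (Finset.prod_nonneg fun m _ => mul_nonneg (h0 _) ?_)
      split_ifs <;> norm_num
  refine hstep.trans (mul_le_mul_of_nonneg_left ?_ (by positivity))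
  rw [← Fintype.sum_pow (fun o => g o * if A l o then 1 / 2 else 1)]
  have hsum : ∑ o, (g o * if A l o then 1 / 2 else 1) = 1 - (∑ o with A l o, g o) / 2 := by
    rw [eq_sub_iff_add_eq]
    refine Eq.trans ?_ h1
    rw [Finset.sum_filter, Finset.sum_div, ← Finset.sum_add_distrib]
    refine Finset.sum_congr rfl fun o _ => ?_
    split_ifs <;> ring
  have hnn : 0 ≤ ∑ o, (g o * if A l o then 1 / 2 else 1) :=
    Finset.sum_nonneg fun o _ => mul_nonneg (h0 o) (by split_ifs <;> norm_num)
  calc _ ≤ Real.exp (-((∑ o with A l o, g o) / 2)) ^ M := by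
        refine pow_le_pow_left₀ hnn ?_ M
        rw [hsum]
        exact Real.one_sub_le_exp_neg _
    _ = _ := by
        rw [← Real.exp_nat_mul]
        congr 1
        ring

theorem tendsto_layerSum_zero {Ω ι : Type*} [Fintype Ω] (A : ι → Ω → Prop) (w : ι → ℕ)
    (g : ℕ → Ω → ℝ) (h0 : ∀ M o, 0 ≤ g M o) (h1 : ∀ M, ∑ o, g M o = 1) (l : ι)
    (hl : Tendsto (fun M : ℕ => M * ∑ o with A l o, g M o) atTop atTop) :
    Tendsto (fun M => layerSum A w M (g M)) atTop (nhds 0) := by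
  refine squeeze_zero
    (fun M => Finset.sum_nonneg fun _ _ => Finset.prod_nonneg fun _ _ => h0 _ _)
    (fun M => layerSum_le_two_pow_mul_exp A w M (g M) (h0 M) (h1 M) l) ?_
  have : Tendsto (fun M : ℕ => -(M * ∑ o with A l o, g M o) / 2) atTop atBot :=
    (tendsto_neg_atTop_atBot.comp hl).atBot_div_const two_pos
  simpa using (Real.tendsto_exp_atBot.comp this).const_mul (2 ^ w l : ℝ)

/-- Poisson limit for rare events observed over `M` independent layers, when simultaneous
occurrences of two events are negligible. -/
theorem tendsto_layerSum_poisson {Ω ι : Type*} [Fintype Ω] [Fintype ι] (A : ι → Ω → Prop)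
    (w : ι → ℕ) (g : ℕ → Ω → ℝ) (h0 : ∀ M o, 0 ≤ g M o) (h1 : ∀ M, ∑ o, g M o = 1) (r : ι → ℝ)
    (hA : ∀ l, Tendsto (fun M : ℕ => M * ∑ o with A l o, g M o) atTop (nhds (r l)))
    (hAA : ∀ l l', l ≠ l' →
      Tendsto (fun M : ℕ => M * ∑ o with A l o ∧ A l' o, g M o) atTop (nhds 0)) :
    Tendsto (fun M => layerSum A w M (g M)) atTop
      (nhds (∏ l, (r l ^ w l * Real.exp (-r l) / ((w l).factorial : ℝ)))) := by
  set bad : Ω → Prop := fun o => ∃ l l', l ≠ l' ∧ A l o ∧ A l' o with hbad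
  set b : ℕ → ℝ := fun M => ∑ o with bad o, g M o with hbdef
  set g' : ℕ → Ω → ℝ := fun M o => if bad o then 0 else g M o with hg'
  have hg'0 : ∀ M o, 0 ≤ g' M o := fun M o => by
    simp only [hg']; split_ifs; exacts [le_rfl, h0 M o]
  have hg'le : ∀ M o, g' M o ≤ g M o := fun M o => by
    simp only [hg']; split_ifs; exacts [h0 M o, le_rfl]
  have hsum' : ∀ M, ∑ o, g' M o = 1 - b M := fun M => by
    rw [← h1 M, eq_sub_iff_add_eq]
    simp only [hbdef, Finset.sum_filter]
    rw [← Finset.sum_add_distrib]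
    refine Finset.sum_congr rfl fun o _ => ?_
    simp only [hg']
    split_ifs <;> simp
  have hble : ∀ M, b M ≤ ∑ x : ι × ι with x.1 ≠ x.2, ∑ o with A x.1 o ∧ A x.2 o, g M o := by
    intro M
    simp only [hbdef, Finset.sum_filter (p := bad),
      Finset.sum_filter (p := fun o => A _ o ∧ A _ o)]
    rw [Finset.sum_comm]
    refine Finset.sum_le_sum fun o _ => ?_
    have hnn : ∀ x ∈ ({x | x.1 ≠ x.2} : Finset (ι × ι)),
        0 ≤ if A x.1 o ∧ A x.2 o then g M o else 0 := fun x _ => by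
      split_ifs; exacts [h0 M o, le_rfl]
    split_ifs with ho
    · obtain ⟨l, l', hne, hl, hl'⟩ := ho
      refine le_trans ?_ (Finset.single_le_sum hnn (a := (l, l')) (by simpa using hne))
      simp [hl, hl']
    · exact Finset.sum_nonneg hnn
  have hb : Tendsto (fun M : ℕ => M * b M) atTop (nhds 0) := by
    have hlim : Tendsto (fun M : ℕ => ∑ x : ι × ι with x.1 ≠ x.2,
        (M : ℝ) * ∑ o with A x.1 o ∧ A x.2 o, g M o) atTop (nhds 0) := by
      simpa using tendsto_finsetSum ({x | x.1 ≠ x.2} : Finset (ι × ι))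
        (fun x hx => hAA x.1 x.2 (by simpa using hx))
    refine squeeze_zero (fun M => mul_nonneg (Nat.cast_nonneg M)
      (Finset.sum_nonneg fun o _ => h0 M o)) (fun M => ?_) hlim
    rw [← Finset.mul_sum]
    exact mul_le_mul_of_nonneg_left (hble M) (Nat.cast_nonneg M)
  set h : Ω → Option ι := fun o => if H : ∃ l, A l o then some H.choose else none with hh
  have hcls : ∀ o, ¬ bad o → ∀ l, (h o = some l ↔ A l o) := by
    intro o ho l
    have huniq : ∀ l l', A l o → A l' o → l = l' := fun l l' hl hl' =>
      by_contra fun hne => ho ⟨l, l', hne, hl, hl'⟩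
    by_cases H : ∃ l, A l o
    · simp only [hh, dif_pos H, Option.some.injEq]
      exact ⟨fun e => e ▸ H.choose_spec, fun hl => huniq _ _ H.choose_spec hl⟩
    · simp only [hh, dif_neg H]
      exact ⟨fun e => by simp at e, fun hl => absurd ⟨l, hl⟩ H⟩
  have hlayer : ∀ M, layerSum A w M (g' M) =
      ∑ η : Fin M → Ω with (∀ l, #{m | h (η m) = some l} = w l), ∏ m, g' M (η m) := by
    intro M
    rw [layerSum, Finset.sum_filter, Finset.sum_filter]
    refine Finset.sum_congr rfl fun η _ => ?_
    by_cases hη : ∃ m, bad (η m)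
    · obtain ⟨m, hm⟩ := hη
      have : ∏ m, g' M (η m) = 0 :=
        Finset.prod_eq_zero (Finset.mem_univ m) (by simp only [hg', if_pos hm])
      simp [this]
    · push Not at hη
      simp only [hcls _ (hη _)]
      congr
  set s : ι → ℕ → ℝ := fun l M => ∑ o with h o = some l, g' M o with hs
  have hsle : ∀ l M, s l M ≤ ∑ o with A l o, g M o := by
    intro l M
    simp only [hs, Finset.sum_filter]
    refine Finset.sum_le_sum fun o _ => ?_
    by_cases ho : bad o
    · simp only [hg', if_pos ho, ite_self]
      split_ifs; exacts [h0 M o, le_rfl]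
    · simp only [hcls o ho, hg', if_neg ho]; exact le_rfl
  have hles : ∀ l M, ∑ o with A l o, g M o - b M ≤ s l M := by
    intro l M
    rw [sub_le_iff_le_add]
    simp only [hs, hbdef, Finset.sum_filter]
    rw [← Finset.sum_add_distrib]
    refine Finset.sum_le_sum fun o _ => ?_
    by_cases ho : bad o
    · simp only [hg', if_pos ho, ite_self]
      split_ifs <;> simp [h0 M o]
    · simp only [hcls o ho, hg', if_neg ho]; simp
  have hslim : ∀ l, Tendsto (fun M : ℕ => M * s l M) atTop (nhds (r l)) := by
    intro l
    have hlow := (hA l).sub hb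
    rw [sub_zero] at hlow
    refine tendsto_of_tendsto_of_tendsto_of_le_of_le hlow (hA l) (fun M => ?_) (fun M => ?_)
    · change (M : ℝ) * _ - M * _ ≤ M * _
      rw [← mul_sub]
      exact mul_le_mul_of_nonneg_left (hles l M) (Nat.cast_nonneg M)
    · exact mul_le_mul_of_nonneg_left (hsle l M) (Nat.cast_nonneg M)
  have hs₀ : ∀ M, 1 - ∑ o with h o = none, g' M o = b M + ∑ l, s l M := by
    intro M
    have := hsum' M
    rw [← Finset.sum_fiberwise univ h, Fintype.sum_option] at this
    simp only [hs]
    linarith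
  have hs₀lim : Tendsto (fun M : ℕ => M * (1 - ∑ o with h o = none, g' M o)) atTop
      (nhds (∑ l, r l)) := by
    have := hb.add (tendsto_finsetSum univ fun l _ => hslim l)
    rw [zero_add] at this
    refine this.congr fun M => ?_
    rw [hs₀, mul_add, Finset.mul_sum univ]
  have hmain : Tendsto (fun M => layerSum A w M (g' M)) atTop
      (nhds (∏ l, (r l ^ w l * Real.exp (-r l) / ((w l).factorial : ℝ)))) := by
    refine (tendsto_multinomial_poisson w r _ s hslim hs₀lim).congr' ?_
    filter_upwards [eventually_ge_atTop (∑ l, w l)] with M hM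
    rw [hlayer, sum_filter_card_some_prod _ _ _ _ hM]
  have hdiff : Tendsto (fun M => layerSum A w M (g M) - layerSum A w M (g' M)) atTop
      (nhds 0) := by
    have hpow : Tendsto (fun M => 1 - (1 - b M) ^ M) atTop (nhds 0) := by
      have := Real.tendsto_one_add_pow_exp_of_tendsto (g := fun M => -b M) (t := 0)
        (by simpa using hb.neg)
      simpa [sub_eq_add_neg] using (tendsto_const_nhds (x := (1 : ℝ))).sub this
    refine squeeze_zero (fun M => sub_nonneg.2 (layerSum_mono A w M _ _ (hg'0 M) (hg'le M)))
      (fun M => ?_) hpow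
    refine (layerSum_sub_le A w M _ _ (hg'0 M) (hg'le M)).trans_eq ?_
    rw [h1, hsum', one_pow]
  simpa using hdiff.add hmain

/-- Probability mass of a Bernoulli variable with success probability `p`. -/
noncomputable def bernMass (p : ℝ) (b : Bool) : ℝ := if b then p else 1 - p

theorem bernMass_nonneg {p : ℝ} (hp : p ∈ Set.Ioc (0 : ℝ) 1) (b : Bool) : 0 ≤ bernMass p b := by
  cases b
  · simpa [bernMass] using hp.2
  · simpa [bernMass] using hp.1.le

theorem bern_real_singleton {p : ℝ} (hp : p ∈ Set.Ioc (0 : ℝ) 1) (b : Bool) :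
    (bern p {b}).toReal = bernMass p b := by
  cases b <;> simp [bern, bernMass, hp.1.le, hp.2]

/-- Probability mass of a family of independent Bernoulli variables. -/
noncomputable def layerMass {κ : Type*} [Fintype κ] (f : κ → ℝ) (o : κ → Bool) : ℝ :=
  ∏ k, bernMass (f k) (o k)

theorem layerMass_nonneg {κ : Type*} [Fintype κ] {f : κ → ℝ}
    (hf : ∀ k, f k ∈ Set.Ioc (0 : ℝ) 1) (o : κ → Bool) : 0 ≤ layerMass f o :=
  Finset.prod_nonneg fun k _ => bernMass_nonneg (hf k) _

instance isFiniteMeasure_bern (p : ℝ) : IsFiniteMeasure (bern p) := by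
  constructor
  simp [bern]

theorem sum_layerMass {κ : Type*} [Fintype κ] [DecidableEq κ] (f : κ → ℝ) (K : Finset κ) :
    ∑ o : κ → Bool with (∀ k ∈ K, o k = true), layerMass f o = ∏ k ∈ K, f k := by
  simp only [layerMass]
  have hset : ({o : κ → Bool | ∀ k ∈ K, o k = true} : Finset (κ → Bool)) =
      Fintype.piFinset fun k => if k ∈ K then {true} else univ := by
    ext o
    simp only [Finset.mem_filter, Finset.mem_univ, true_and, Fintype.mem_piFinset]
    refine forall_congr' fun k => ?_
    by_cases hk : k ∈ K <;> simp [hk]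
  rw [hset, ← Finset.prod_univ_sum, ← Finset.prod_subset (Finset.subset_univ K)]
  · refine Finset.prod_congr rfl fun k hk => ?_
    simp [hk, bernMass]
  · intro k _ hk
    simp [hk, bernMass]

/-- Regrouping of the coordinates of the model by layer. -/
def layerEquiv (V : Type) (M : ℕ) :
    (((Fin M × (V × V)) ⊕ (Fin M × V)) → Bool) ≃ (Fin M → ((V × V) ⊕ V) → Bool) :=
  ((Equiv.prodSumDistrib (Fin M) (V × V) V).symm.arrowCongr (Equiv.refl Bool)).trans
    (Equiv.curry (Fin M) ((V × V) ⊕ V) Bool)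

/-- The coordinates of a layer that determine the existence of a link. -/
def linkCoords {V : Type} [DecidableEq V] (l : V × V) : Finset ((V × V) ⊕ V) :=
  {Sum.inl l, Sum.inr l.1, Sum.inr l.2}

/-- The link `l` exists in the layer configuration `o`. -/
def linkPresent {V : Type} [DecidableEq V] (l : V × V) (o : (V × V) ⊕ V → Bool) : Prop :=
  ∀ k ∈ linkCoords l, o k = true

theorem exOn_iff {V : Type} [DecidableEq V] {M : ℕ} (m : Fin M) (l : V × V)
    (ω : ((Fin M × (V × V)) ⊕ (Fin M × V)) → Bool) :
    exOn m l ω ↔ linkPresent l (layerEquiv V M ω m) := by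
  simp [exOn, linkPresent, linkCoords, layerEquiv]

theorem netμ_toReal_eq_layerSum {V : Type} [Fintype V] [DecidableEq V] (E : Finset (V × V)) (M : ℕ)
    (p : V × V → ℝ) (q : V → ℝ) (hp : ∀ l, p l ∈ Set.Ioc (0 : ℝ) 1)
    (hq : ∀ i, q i ∈ Set.Ioc (0 : ℝ) 1) (w : V × V → ℕ) :
    ((netμ V M p q) {ω | ∀ l ∈ E, Wnum l ω = w l}).toReal =
      layerSum (fun l : E => linkPresent (l : V × V)) (fun l => w l) M
        (layerMass (Sum.elim p q)) := by
  have hfin : IsFiniteMeasure (netμ V M p q) := by unfold netμ; infer_instance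
  have hmass : ∀ ω, (netμ V M p q).real {ω} =
      ∏ m, layerMass (Sum.elim p q) (layerEquiv V M ω m) := by
    intro ω
    simp only [layerMass]
    rw [measureReal_def, netμ, Measure.pi_singleton, ENNReal.toReal_prod, Fintype.prod_sum_type]
    simp only [Fintype.prod_sum_type, Finset.prod_mul_distrib, Sum.elim_inl, Sum.elim_inr,
      bern_real_singleton (hp _), bern_real_singleton (hq _), Fintype.prod_prod_type]
    simp [layerEquiv]
  rw [← measureReal_def, ← Set.coe_toFinset (Set.ofPred _), ← sum_measureReal_singleton, layerSum]
  refine Finset.sum_equiv (layerEquiv V M) (fun ω => ?_) fun ω _ => hmass ω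
  simp only [Set.mem_toFinset, Set.mem_ofPred_eq, Finset.mem_filter, Finset.mem_univ,
    true_and, Subtype.forall, Wnum, exOn_iff]

theorem linkCoords_inter {V : Type} [DecidableEq V] {l l' : V × V} (hne : l ≠ l')
    (hl : l.1 ≠ l.2) (hl' : l'.1 ≠ l'.2) (hswap : (l.2, l.1) ≠ l') :
    linkCoords l ∩ linkCoords l' = ∅ ∨ ∃ k : V, linkCoords l ∩ linkCoords l' = {Sum.inr k} ∧
      (l.1 = k ∨ l.2 = k) ∧ (l'.1 = k ∨ l'.2 = k) := by
  obtain ⟨a, b⟩ := l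
  obtain ⟨a', b'⟩ := l'
  simp only [ne_eq, Prod.mk.injEq] at hne hl hl' hswap
  by_cases h : ∃ k, (a = k ∨ b = k) ∧ (a' = k ∨ b' = k)
  · obtain ⟨k, hk, hk'⟩ := h
    refine Or.inr ⟨k, ?_, hk, hk'⟩
    ext x
    rcases x with x | x
    · simp [linkCoords]; grind
    · simp [linkCoords]; grind
  · left
    have haa : a ≠ a' := fun e => h ⟨a, by simp [e]⟩
    have hab : a ≠ b' := fun e => h ⟨a, by simp [e]⟩
    have hba : b ≠ a' := fun e => h ⟨b, by simp [e]⟩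
    have hbb : b ≠ b' := fun e => h ⟨b, by simp [e]⟩
    ext x
    rcases x with x | x
    · simp [linkCoords]; grind
    · simp [linkCoords]; grind

theorem tendsto_mul_rpow_atTop {u : ℕ → ℝ} {a e : ℝ} (ha : 0 < a) (he : e < 1)
    (hu : Tendsto (fun M : ℕ => u M * (M : ℝ) ^ e) atTop (nhds a)) :
    Tendsto (fun M : ℕ => M * u M) atTop atTop := by
  have hpow : Tendsto (fun M : ℕ => (M : ℝ) ^ (1 - e)) atTop atTop :=
    (tendsto_rpow_atTop (sub_pos.2 he)).comp tendsto_natCast_atTop_atTop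
  refine (hu.pos_mul_atTop ha hpow).congr' ?_
  filter_upwards [eventually_gt_atTop 0] with M hM
  have hM' : (0 : ℝ) < M := by exact_mod_cast hM
  rw [mul_assoc, ← Real.rpow_add hM', add_sub_cancel, Real.rpow_one, mul_comm]

theorem tendsto_mul_rpow_zero {u : ℕ → ℝ} {a e : ℝ} (he : 1 < e)
    (hu : Tendsto (fun M : ℕ => u M * (M : ℝ) ^ e) atTop (nhds a)) :
    Tendsto (fun M : ℕ => M * u M) atTop (nhds 0) := by
  have hpow : Tendsto (fun M : ℕ => (M : ℝ) ^ (-(e - 1))) atTop (nhds 0) :=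
    (tendsto_rpow_neg_atTop (sub_pos.2 he)).comp tendsto_natCast_atTop_atTop
  have hlim := hu.mul hpow
  rw [mul_zero] at hlim
  refine hlim.congr' ?_
  filter_upwards [eventually_gt_atTop 0] with M hM
  have hM' : (0 : ℝ) < M := by exact_mod_cast hM
  rw [mul_assoc, ← Real.rpow_add hM', show e + -(e - 1) = 1 by ring, Real.rpow_one, mul_comm]

/-- asymptotic independence with Poisson limits.  Under the scalings
`p_ℓ(M) ~ c_ℓ M^{−α_ℓ}`, `q_i(M) ~ d_i M^{−β_i}` and the regularity condition
(`β_k < 1` whenever at least two links incident to `k` have exponent sum `1`),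
the joint distribution of the multiplicities `(W_ℓ)_{ℓ∈E}` converges to a product of
(possibly degenerate) Poisson distributions with parameters `λ_ℓ`. -/
theorem stmt11 {V : Type} [Fintype V] [DecidableEq V] (E : Finset (V × V))
    (hE1 : ∀ ℓ ∈ E, ℓ.1 ≠ ℓ.2) (hE2 : ∀ ℓ ∈ E, (ℓ.2, ℓ.1) ∉ E)
    (p : ℕ → (V × V) → ℝ) (q : ℕ → V → ℝ)
    (hp : ∀ M ℓ, p M ℓ ∈ Set.Ioc (0 : ℝ) 1) (hq : ∀ M i, q M i ∈ Set.Ioc (0 : ℝ) 1)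
    (α c : (V × V) → ℝ) (β d : V → ℝ)
    (hα : ∀ ℓ ∈ E, 0 ≤ α ℓ) (hβ : ∀ i, 0 ≤ β i)
    (hc : ∀ ℓ ∈ E, 0 < c ℓ) (hd : ∀ i, 0 < d i)
    (hplim : ∀ ℓ ∈ E, Tendsto (fun M : ℕ => p M ℓ * (M : ℝ) ^ (α ℓ)) atTop (nhds (c ℓ)))
    (hqlim : ∀ i, Tendsto (fun M : ℕ => q M i * (M : ℝ) ^ (β i)) atTop (nhds (d i)))
    (hreg : ∀ k : V,
      2 ≤ (E.filter fun ℓ => (ℓ.1 = k ∨ ℓ.2 = k) ∧ α ℓ + β ℓ.1 + β ℓ.2 = 1).card →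
      β k < 1)
    (w : (V × V) → ℕ) :
    Tendsto (fun M : ℕ =>
        ((netμ V M (p M) (q M)) {ω | ∀ ℓ ∈ E, Wnum ℓ ω = w ℓ}).toReal) atTop
      (nhds (∏ ℓ ∈ E,
        if 1 < α ℓ + β ℓ.1 + β ℓ.2 then (if w ℓ = 0 then (1 : ℝ) else 0)
        else if α ℓ + β ℓ.1 + β ℓ.2 = 1 then
          (c ℓ * d ℓ.1 * d ℓ.2) ^ (w ℓ) * Real.exp (-(c ℓ * d ℓ.1 * d ℓ.2))
            / ((w ℓ).factorial : ℝ)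
        else 0)) := by
  set A : E → ((V × V) ⊕ V → Bool) → Prop := fun l => linkPresent (l : V × V) with hA
  set f : ℕ → (V × V) ⊕ V → ℝ := fun M => Sum.elim (p M) (q M) with hf
  set g : ℕ → ((V × V) ⊕ V → Bool) → ℝ := fun M => layerMass (f M) with hg
  have hf01 : ∀ M k, f M k ∈ Set.Ioc (0 : ℝ) 1 := fun M k => by
    rcases k with k | k
    exacts [hp M k, hq M k]
  have h0 : ∀ M o, 0 ≤ g M o := fun M o =>
    layerMass_nonneg (hf01 M) o
  have h1 : ∀ M, ∑ o, g M o = 1 := fun M => by simpa using sum_layerMass (f M) ∅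
  have hmass : ∀ (l : E) M, ∑ o with A l o, g M o = ∏ k ∈ linkCoords (l : V × V), f M k :=
    fun l M => by
      rw [← sum_layerMass]
      exact Finset.sum_congr (Finset.filter_congr fun _ _ => Iff.rfl) fun _ _ => rfl
  have hmass₂ : ∀ (l l' : E) M, ∑ o with A l o ∧ A l' o, g M o =
      ∏ k ∈ linkCoords (l : V × V) ∪ linkCoords (l' : V × V), f M k := fun l l' M => by
    rw [← sum_layerMass]
    refine Finset.sum_congr (Finset.filter_congr fun o _ => ?_) fun _ _ => rfl
    simp only [hA, linkPresent, Finset.mem_union, or_imp, forall_and]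
  have hlink : ∀ (l : E) M, ∏ k ∈ linkCoords (l : V × V), f M k =
      p M l * q M (l : V × V).1 * q M (l : V × V).2 := fun l M => by
    have := hE1 l l.2
    simp [linkCoords, hf, this, mul_assoc]
  have hscale : ∀ l : E, Tendsto (fun M : ℕ => (∏ k ∈ linkCoords (l : V × V), f M k) *
      (M : ℝ) ^ (α l + β (l : V × V).1 + β (l : V × V).2)) atTop
      (nhds (c l * d (l : V × V).1 * d (l : V × V).2)) := fun l => by
    refine (((hplim l l.2).mul (hqlim (l : V × V).1)).mul (hqlim (l : V × V).2)).congr' ?_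
    filter_upwards [eventually_gt_atTop 0] with M hM
    have hM' : (0 : ℝ) < M := by exact_mod_cast hM
    rw [hlink, Real.rpow_add hM', Real.rpow_add hM']
    ring
  have hcd : ∀ l : E, 0 < c l * d (l : V × V).1 * d (l : V × V).2 := fun l =>
    mul_pos (mul_pos (hc l l.2) (hd _)) (hd _)
  rw [← Finset.prod_coe_sort]
  refine Tendsto.congr
    (fun M => (netμ_toReal_eq_layerSum E M (p M) (q M) (hp M) (hq M) w).symm) ?_
  by_cases hsub : ∃ l : E, α l + β (l : V × V).1 + β (l : V × V).2 < 1
  · obtain ⟨l, hl⟩ := hsub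
    rw [Finset.prod_eq_zero (Finset.mem_univ l) (by rw [if_neg hl.not_gt, if_neg hl.ne])]
    refine tendsto_layerSum_zero A _ g h0 h1 l ?_
    simp only [hmass]
    exact tendsto_mul_rpow_atTop (hcd l) hl (hscale l)
  push Not at hsub
  set r : E → ℝ := fun l => if 1 < α l + β (l : V × V).1 + β (l : V × V).2 then 0
    else c l * d (l : V × V).1 * d (l : V × V).2 with hr
  have hprod : ∏ l : E, (if 1 < α l + β (l : V × V).1 + β (l : V × V).2 then
        (if w l = 0 then (1 : ℝ) else 0)
      else if α l + β (l : V × V).1 + β (l : V × V).2 = 1 then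
        (c l * d (l : V × V).1 * d (l : V × V).2) ^ (w l) *
          Real.exp (-(c l * d (l : V × V).1 * d (l : V × V).2)) / ((w l).factorial : ℝ)
      else 0) = ∏ l : E, (r l ^ w l * Real.exp (-r l) / ((w l).factorial : ℝ)) := by
    refine Finset.prod_congr rfl fun l _ => ?_
    by_cases hl : 1 < α l + β (l : V × V).1 + β (l : V × V).2
    · by_cases hw : w l = 0 <;> simp [hr, hl, hw]
    · simp only [hr, if_neg hl, if_pos (le_antisymm (not_lt.1 hl) (hsub l))]
  rw [hprod]
  have hsingle : ∀ l : E, Tendsto (fun M : ℕ => M * ∏ k ∈ linkCoords (l : V × V), f M k) atTop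
      (nhds (r l)) := fun l => by
    by_cases hl : 1 < α l + β (l : V × V).1 + β (l : V × V).2
    · simp only [hr, if_pos hl]
      exact tendsto_mul_rpow_zero hl (hscale l)
    · have := hscale l
      simp only [le_antisymm (not_lt.1 hl) (hsub l), Real.rpow_one] at this
      simpa only [hr, if_neg hl, mul_comm] using this
  refine tendsto_layerSum_poisson A _ g h0 h1 r (fun l => by simpa only [hmass] using hsingle l)
    fun l l' hne => ?_
  have hnonneg : ∀ M : ℕ, 0 ≤ (M : ℝ) * ∑ o with A l o ∧ A l' o, g M o := fun M =>
    mul_nonneg (Nat.cast_nonneg M) (Finset.sum_nonneg fun o _ => h0 M o)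
  have hbound : ∀ l'' : E, (∀ o, A l o ∧ A l' o → A l'' o) →
      1 < α l'' + β (l'' : V × V).1 + β (l'' : V × V).2 →
      Tendsto (fun M : ℕ => M * ∑ o with A l o ∧ A l' o, g M o) atTop (nhds 0) := by
    intro l'' himp hl''
    have hlim := hsingle l''
    simp only [hr, if_pos hl'', ← hmass] at hlim
    refine squeeze_zero hnonneg (fun M => ?_) hlim
    refine mul_le_mul_of_nonneg_left ?_ (Nat.cast_nonneg M)
    exact Finset.sum_le_sum_of_subset_of_nonneg
      (Finset.monotone_filter_right _ fun o _ => himp o) fun o _ _ => h0 M o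
  by_cases hl : 1 < α l + β (l : V × V).1 + β (l : V × V).2
  · exact hbound l (fun _ h => h.1) hl
  by_cases hl' : 1 < α l' + β (l' : V × V).1 + β (l' : V × V).2
  · exact hbound l' (fun _ h => h.2) hl'
  have hcrit := le_antisymm (not_lt.1 hl) (hsub l)
  have hcrit' := le_antisymm (not_lt.1 hl') (hsub l')
  have hinter : Tendsto (fun M : ℕ =>
      M * ∏ k ∈ linkCoords (l : V × V) ∩ linkCoords (l' : V × V), f M k) atTop atTop := by
    rcases linkCoords_inter (fun h => hne (Subtype.ext h)) (hE1 l l.2) (hE1 l' l'.2)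
      (fun h => hE2 l l.2 (h ▸ l'.2)) with hempty | ⟨k, hk, hlk, hlk'⟩
    · simpa [hempty] using tendsto_natCast_atTop_atTop (R := ℝ)
    · have hβk : β k < 1 := hreg k <| by
        refine Nat.succ_le_of_lt
          (Finset.one_lt_card.2 ⟨l, ?_, l', ?_, fun h => hne (Subtype.ext h)⟩)
        · exact Finset.mem_filter.2 ⟨l.2, hlk, hcrit⟩
        · exact Finset.mem_filter.2 ⟨l'.2, hlk', hcrit'⟩
      simpa [hk, hf] using tendsto_mul_rpow_atTop (hd k) hβk (hqlim k)
  refine (((hsingle l).mul (hsingle l')).div_atTop hinter).congr' ?_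
  filter_upwards [eventually_gt_atTop 0] with M hM
  have hM' : (M : ℝ) ≠ 0 := by positivity
  have hpos : ∏ k ∈ linkCoords (l : V × V) ∩ linkCoords (l' : V × V), f M k ≠ 0 :=
    Finset.prod_ne_zero_iff.2 fun k _ => (hf01 M k).1.ne'
  rw [hmass₂, div_eq_iff (mul_ne_zero hM' hpos)]
  have := Finset.prod_union_inter (s₁ := linkCoords (l : V × V)) (s₂ := linkCoords (l' : V × V))
    (f := f M)
  linear_combination (-(M : ℝ) ^ 2) * this
end

section
/- Consider a sequence of M-layer models indexed by M on a fixed finite simple graph G = (V,E), with no link thinning (p_ℓ(M) = 1 for all ℓ), node activation probabilities q_i(M) = d M^{−1/2} for all i ∈ V with a fixed constant d > 0, and threshold K = 1 (so X_ℓ = 1 iff W_ℓ ≥ 1). Then for every link configuration x : E → {0,1}, writing 𝓔 = {ℓ ∈ E : x_ℓ = 1}: lim_{M→∞} P[X_ℓ = x_ℓ for all ℓ ∈ E] = e^{−d² (|E| − |𝓔|)} (1 − e^{−d²})^{|𝓔|}. -/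
open MeasureTheory Filter Finset

open scoped Classical

/-- The `M`-layer model without link thinning: only the node activation variables
`Z_{m,i}`, each node active on each layer independently with probability `q i`. -/
noncomputable def nodeμ (V : Type) [Fintype V] (M : ℕ) (q : V → ℝ) :
    Measure ((Fin M × V) → Bool) :=
  Measure.pi fun k => bern (q k.2)

/-- `W_ℓ` for `ℓ = (i,j)`: the number of layers on which both `i` and `j` are active. -/
noncomputable def Wnd {V : Type} {M : ℕ} (ℓ : V × V) (ω : (Fin M × V) → Bool) : ℕ :=
  (Finset.univ.filter fun m : Fin M => ω (m, ℓ.1) = true ∧ ω (m, ℓ.2) = true).card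

/-- Point mass of the Bernoulli law. -/
noncomputable def bernWeight (p : ℝ) (b : Bool) : ℝ := if b = true then p else 1 - p

theorem sum_bernWeight (p : ℝ) : ∑ b, bernWeight p b = 1 := by
  simp [bernWeight]

theorem bern_singleton_toReal {p : ℝ} (h0 : 0 ≤ p) (h1 : p ≤ 1) (b : Bool) :
    (bern p {b}).toReal = bernWeight p b := by
  cases b <;> simp [bern, bernWeight, h0, h1]

theorem isProbabilityMeasure_bern {p : ℝ} (h0 : 0 ≤ p) (h1 : p ≤ 1) :
    IsProbabilityMeasure (bern p) := by
  constructor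
  simp only [bern, Measure.coe_add, Measure.coe_smul, Pi.add_apply, Pi.smul_apply, measure_univ,
    smul_eq_mul, mul_one]
  rw [← ENNReal.ofReal_add h0 (by linarith)]
  simp

/-- Indicator that the link `ℓ` is not realised by the one-layer configuration `z`. -/
noncomputable def offInd {V : Type} (ℓ : V × V) (z : V → Bool) : ℝ :=
  if z ℓ.1 = true ∧ z ℓ.2 = true then 0 else 1

/-- Probability of a one-layer node configuration. -/
noncomputable def layerWeight {V : Type} [Fintype V] (q : ℝ) (z : V → Bool) : ℝ :=
  ∏ v, bernWeight q (z v)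

/-- Probability that no link of `S` is realised on a given layer. -/
noncomputable def layerOff {V : Type} [Fintype V] (S : Finset (V × V)) (q : ℝ) : ℝ :=
  ∑ z : V → Bool, layerWeight q z * ∏ ℓ ∈ S, offInd ℓ z

theorem sum_layerWeight {V : Type} [Fintype V] (q : ℝ) :
    ∑ z : V → Bool, layerWeight q z = 1 := by
  have h := Finset.prod_univ_sum (fun _ : V => (Finset.univ : Finset Bool))
    (fun _ b => bernWeight q b)
  simp only [sum_bernWeight, prod_const_one, Fintype.piFinset_univ] at h
  exact h.symm

theorem layerWeight_eq {V : Type} [Fintype V] (q : ℝ) (z : V → Bool) :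
    layerWeight q z = q ^ #{v | z v = true} * (1 - q) ^ #{v | ¬ z v = true} := by
  simp only [layerWeight, bernWeight, prod_ite, prod_const]

theorem prod_offInd {V : Type} (S : Finset (V × V)) (z : V → Bool) :
    ∏ ℓ ∈ S, offInd ℓ z = if ∃ ℓ ∈ S, z ℓ.1 = true ∧ z ℓ.2 = true then 0 else 1 := by
  split_ifs with h
  · obtain ⟨ℓ, hℓ, hz⟩ := h
    exact prod_eq_zero hℓ (by simp [offInd, hz])
  · push Not at h
    refine prod_eq_one fun ℓ hℓ => ?_
    have := h ℓ hℓ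
    simp only [offInd, ite_eq_right_iff, and_imp]
    intro h1 h2
    exact absurd h2 (this h1)

/-- The set of layer configurations with exactly two active nodes, joined by a link of `S`,
is in bijection with `S`. -/
theorem card_pairs {V : Type} [Fintype V] (S : Finset (V × V))
    (h1 : ∀ ℓ ∈ S, ℓ.1 ≠ ℓ.2) (h2 : ∀ ℓ ∈ S, (ℓ.2, ℓ.1) ∉ S) :
    #{z : V → Bool | (∃ ℓ ∈ S, z ℓ.1 = true ∧ z ℓ.2 = true) ∧ #{v | z v = true} = 2} = #S := by
  have himg : ({z : V → Bool | (∃ ℓ ∈ S, z ℓ.1 = true ∧ z ℓ.2 = true) ∧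
      #{v | z v = true} = 2} : Finset (V → Bool)) =
      S.image fun ℓ v => decide (v = ℓ.1 ∨ v = ℓ.2) := by
    ext z
    simp only [mem_filter, mem_univ, true_and, mem_image]
    constructor
    · rintro ⟨⟨ℓ, hℓ, ha, hb⟩, hc⟩
      refine ⟨ℓ, hℓ, ?_⟩
      have hsub : ({ℓ.1, ℓ.2} : Finset V) = ({v | z v = true} : Finset V) := by
        apply eq_of_subset_of_card_le
        · intro v hv
          simp only [mem_insert, mem_singleton] at hv
          rcases hv with rfl | rfl <;> simp [ha, hb]
        · rw [hc, card_pair (h1 ℓ hℓ)]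
      funext v
      have hv := Finset.ext_iff.1 hsub v
      simp only [mem_insert, mem_singleton, mem_filter, mem_univ, true_and] at hv
      rw [Bool.eq_iff_iff, decide_eq_true_iff, hv]
    · rintro ⟨ℓ, hℓ, rfl⟩
      refine ⟨⟨ℓ, hℓ, by simp, by simp⟩, ?_⟩
      rw [← card_pair (h1 ℓ hℓ)]
      congr 1
      ext v
      simp
  rw [himg]
  refine card_image_of_injOn ?_
  rintro ⟨a, b⟩ hab ⟨a', b'⟩ hab' h
  have e1 := congrFun h a
  have e2 := congrFun h b
  have n1 := h1 _ hab
  have n2 := h2 _ hab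
  simp only [true_or, or_true, decide_true] at e1 e2
  have e1 := of_decide_eq_true e1.symm
  have e2 := of_decide_eq_true e2.symm
  simp only [mem_coe] at hab hab' n1 n2 e1 e2
  grind

theorem two_le_card_active {V : Type} [Fintype V] {S : Finset (V × V)}
    (h1 : ∀ ℓ ∈ S, ℓ.1 ≠ ℓ.2) {z : V → Bool} (hz : ∃ ℓ ∈ S, z ℓ.1 = true ∧ z ℓ.2 = true) :
    2 ≤ #{v | z v = true} := by
  obtain ⟨ℓ, hℓ, ha, hb⟩ := hz
  rw [← card_pair (h1 ℓ hℓ)]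
  refine card_le_card fun v hv => ?_
  simp only [mem_insert, mem_singleton] at hv
  rcases hv with rfl | rfl <;> simp [ha, hb]

theorem tendsto_mul_layerOff_sub_one {V : Type} [Fintype V] (S : Finset (V × V))
    (h1 : ∀ ℓ ∈ S, ℓ.1 ≠ ℓ.2) (h2 : ∀ ℓ ∈ S, (ℓ.2, ℓ.1) ∉ S) (c : ℝ) {q : ℕ → ℝ}
    (hq : Tendsto q atTop (nhds 0)) (hc : ∀ᶠ M : ℕ in atTop, M * q M ^ 2 = c) :
    Tendsto (fun M : ℕ => (M : ℝ) * (layerOff S (q M) - 1)) atTop (nhds (-c * #S)) := by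
  have hlim : -c * (#S : ℝ) = ∑ z : V → Bool,
      if ∃ ℓ ∈ S, z ℓ.1 = true ∧ z ℓ.2 = true then -(c * 0 ^ (#{v | z v = true} - 2) *
        (1 - 0) ^ #{v | ¬ z v = true}) else 0 := by
    rw [← card_pairs S h1 h2, card_filter, Nat.cast_sum, mul_sum]
    refine sum_congr rfl fun z _ => ?_
    by_cases hz : ∃ ℓ ∈ S, z ℓ.1 = true ∧ z ℓ.2 = true
    · have := two_le_card_active h1 hz
      rw [if_pos hz]
      by_cases hk : #{v | z v = true} = 2
      · rw [if_pos ⟨hz, hk⟩, hk]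
        simp
      · rw [if_neg fun h => hk h.2, zero_pow (by omega)]
        simp
    · rw [if_neg hz, if_neg fun h => hz h.1]
      simp
  have hfun : ∀ M : ℕ, (M : ℝ) * (layerOff S (q M) - 1) = ∑ z : V → Bool,
      if ∃ ℓ ∈ S, z ℓ.1 = true ∧ z ℓ.2 = true then -(M * layerWeight (q M) z) else 0 := by
    intro M
    rw [← sum_layerWeight (V := V) (q M), layerOff, ← sum_sub_distrib, mul_sum]
    refine sum_congr rfl fun z _ => ?_
    rw [prod_offInd]
    split_ifs <;> ring
  rw [hlim]
  simp only [hfun]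
  refine tendsto_finsetSum _ fun z _ => ?_
  split_ifs with hz
  · have hk := two_le_card_active h1 hz
    have ht : Tendsto (fun M => -(c * q M ^ (#{v | z v = true} - 2) *
        (1 - q M) ^ #{v | ¬ z v = true})) atTop
        (nhds (-(c * 0 ^ (#{v | z v = true} - 2) * (1 - 0) ^ #{v | ¬ z v = true}))) :=
      (((hq.pow _).const_mul c).mul ((hq.const_sub 1).pow _)).neg
    refine ht.congr' ?_
    filter_upwards [hc] with M hM
    obtain ⟨k, hk'⟩ := Nat.exists_eq_add_of_le hk
    rw [layerWeight_eq, hk', ← hM, Nat.add_sub_cancel_left]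
    ring
  · exact tendsto_const_nhds

theorem tendsto_layerOff_pow {V : Type} [Fintype V] (S : Finset (V × V))
    (h1 : ∀ ℓ ∈ S, ℓ.1 ≠ ℓ.2) (h2 : ∀ ℓ ∈ S, (ℓ.2, ℓ.1) ∉ S) (c : ℝ) {q : ℕ → ℝ}
    (hq : Tendsto q atTop (nhds 0)) (hc : ∀ᶠ M : ℕ in atTop, M * q M ^ 2 = c) :
    Tendsto (fun M : ℕ => layerOff S (q M) ^ M) atTop (nhds (Real.exp (-c) ^ #S)) := by
  have h := Real.tendsto_one_add_pow_exp_of_tendsto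
    (tendsto_mul_layerOff_sub_one S h1 h2 c hq hc)
  simp only [add_sub_cancel] at h
  rwa [mul_comm, Real.exp_nat_mul] at h

/-- Independence of the layers. -/
theorem sum_layers {V : Type} [Fintype V] (M : ℕ) (S : Finset (V × V)) (q : ℝ) :
    ∑ ω : Fin M × V → Bool, (∏ k, bernWeight q (ω k)) *
      ∏ ℓ ∈ S, ∏ m, offInd ℓ (fun v => ω (m, v)) = layerOff S q ^ M := by
  have h := Finset.prod_univ_sum (fun _ : Fin M => (Finset.univ : Finset (V → Bool)))
    (fun _ z => layerWeight q z * ∏ ℓ ∈ S, offInd ℓ z)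
  rw [prod_const, card_univ, Fintype.card_fin, Fintype.piFinset_univ] at h
  rw [layerOff, h, ← (Equiv.curry (Fin M) V Bool).sum_comp]
  refine sum_congr rfl fun ω _ => ?_
  rw [prod_mul_distrib, prod_comm (s := S), Fintype.prod_prod_type]
  rfl

theorem one_le_Wnd_iff {V : Type} {M : ℕ} (ℓ : V × V) (ω : Fin M × V → Bool) :
    1 ≤ Wnd ℓ ω ↔ ∃ m, ω (m, ℓ.1) = true ∧ ω (m, ℓ.2) = true := by
  rw [Wnd, Nat.one_le_iff_ne_zero, ← Nat.pos_iff_ne_zero, card_pos]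
  simp [Finset.Nonempty]

theorem prod_offInd_layers {V : Type} {M : ℕ} (ℓ : V × V) (ω : Fin M × V → Bool) :
    ∏ m, offInd ℓ (fun v => ω (m, v)) = if 1 ≤ Wnd ℓ ω then 0 else 1 := by
  split_ifs with h
  · rw [one_le_Wnd_iff] at h
    obtain ⟨m, hm⟩ := h
    exact prod_eq_zero (mem_univ m) (by simp [offInd, hm])
  · refine prod_eq_one fun m _ => ?_
    exact if_neg fun hm => h ((one_le_Wnd_iff ℓ ω).2 ⟨m, hm⟩)

/-- Inclusion–exclusion for the indicator of a link configuration. -/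
theorem indicator_config {V : Type} {M : ℕ} (E : Finset (V × V)) (x : V × V → Bool)
    (ω : Fin M × V → Bool) [Decidable (∀ ℓ ∈ E, (1 ≤ Wnd ℓ ω ↔ x ℓ = true))] :
    (if ∀ ℓ ∈ E, (1 ≤ Wnd ℓ ω ↔ x ℓ = true) then (1 : ℝ) else 0) =
      ∑ T ∈ (E.filter fun ℓ => x ℓ = true).powerset, (-1) ^ #T *
        ∏ ℓ ∈ T ∪ E.filter (fun ℓ => ¬ x ℓ = true), ∏ m, offInd ℓ (fun v => ω (m, v)) := by
  set f : V × V → ℝ := fun ℓ => ∏ m, offInd ℓ (fun v => ω (m, v)) with hf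
  have hprod : (if ∀ ℓ ∈ E, (1 ≤ Wnd ℓ ω ↔ x ℓ = true) then (1 : ℝ) else 0) =
      ∏ ℓ ∈ E, if x ℓ = true then 1 - f ℓ else f ℓ := by
    have hboole := prod_boole (M₀ := ℝ) (s := E) (p := fun ℓ => 1 ≤ Wnd ℓ ω ↔ x ℓ = true)
    refine Eq.trans (by convert hboole.symm) ?_
    refine prod_congr rfl fun ℓ _ => ?_
    simp only [hf, prod_offInd_layers]
    split_ifs <;> simp_all
  rw [hprod, prod_ite]
  simp_rw [sub_eq_neg_add]
  rw [prod_add_one, sum_mul]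
  refine sum_congr rfl fun T hT => ?_
  rw [prod_neg, prod_union, mul_assoc]
  exact disjoint_of_subset_left (mem_powerset.1 hT) (disjoint_filter_filter_not _ _ _)

theorem nodeμ_config_toReal {V : Type} [Fintype V] (M : ℕ) (E : Finset (V × V))
    (x : V × V → Bool) {q : ℝ} (h0 : 0 ≤ q) (h1 : q ≤ 1) :
    (nodeμ V M (fun _ => q) {ω | ∀ ℓ ∈ E, (1 ≤ Wnd ℓ ω ↔ x ℓ = true)}).toReal =
      ∑ T ∈ (E.filter fun ℓ => x ℓ = true).powerset, (-1) ^ #T *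
        layerOff (T ∪ E.filter fun ℓ => ¬ x ℓ = true) q ^ M := by
  have := isProbabilityMeasure_bern h0 h1
  have hpoint : ∀ ω : Fin M × V → Bool,
      (nodeμ V M (fun _ => q)).real {ω} = ∏ k, bernWeight q (ω k) := by
    intro ω
    rw [Measure.real, nodeμ, Measure.pi_singleton, ENNReal.toReal_prod]
    exact prod_congr rfl fun k _ => bern_singleton_toReal h0 h1 _
  have : IsProbabilityMeasure (nodeμ V M (fun _ => q)) := by
    unfold nodeμ
    infer_instance
  have hset : {ω : Fin M × V → Bool | ∀ ℓ ∈ E, (1 ≤ Wnd ℓ ω ↔ x ℓ = true)} =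
      ((Finset.univ.filter fun ω : Fin M × V → Bool =>
        ∀ ℓ ∈ E, (1 ≤ Wnd ℓ ω ↔ x ℓ = true) : Finset _) : Set (Fin M × V → Bool)) := by
    ext ω
    simp
  rw [← Measure.real, hset, ← sum_measureReal_singleton, sum_filter]
  simp_rw [hpoint, ← sum_layers, mul_sum]
  rw [sum_comm]
  refine sum_congr rfl fun ω _ => ?_
  rw [← mul_boole, indicator_config, mul_sum]
  exact sum_congr rfl fun T _ => mul_left_comm _ _ _

/-- with `p_ℓ = 1`, `q_i(M) = d M^{−1/2}` and `K = 1`, the probability of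
any link configuration `x` converges to `e^{−d²(|E|−|𝓔|)} (1−e^{−d²})^{|𝓔|}`, where
`𝓔 = {ℓ ∈ E : x_ℓ = 1}`. -/
theorem stmt12 {V : Type} [Fintype V] [DecidableEq V] (E : Finset (V × V))
    (hE1 : ∀ ℓ ∈ E, ℓ.1 ≠ ℓ.2) (hE2 : ∀ ℓ ∈ E, (ℓ.2, ℓ.1) ∉ E)
    (d : ℝ) (hd : 0 < d) (x : (V × V) → Bool) :
    Tendsto (fun M : ℕ =>
        ((nodeμ V M fun _ => d * (M : ℝ) ^ (-(1 / 2) : ℝ))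
          {ω | ∀ ℓ ∈ E, (1 ≤ Wnd ℓ ω ↔ x ℓ = true)}).toReal) atTop
      (nhds (Real.exp (-(d ^ 2) * ((E.card : ℝ) - ((E.filter fun ℓ => x ℓ = true).card : ℝ)))
        * (1 - Real.exp (-(d ^ 2))) ^ (E.filter fun ℓ => x ℓ = true).card)) := by
  set q : ℕ → ℝ := fun M => d * (M : ℝ) ^ (-(1 / 2) : ℝ) with hqdef
  have hq : Tendsto q atTop (nhds 0) := by
    have h := ((tendsto_rpow_neg_atTop (y := 1 / 2) (by norm_num)).comp
      tendsto_natCast_atTop_atTop).const_mul d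
    simpa [hqdef] using h
  have hc : ∀ᶠ M : ℕ in atTop, M * q M ^ 2 = d ^ 2 := by
    filter_upwards [eventually_gt_atTop 0] with M hM
    have hM' : (0 : ℝ) < M := by exact_mod_cast hM
    have hsq : ((M : ℝ) ^ (-(1 / 2) : ℝ)) ^ 2 = (M : ℝ)⁻¹ := by
      rw [← Real.rpow_natCast, ← Real.rpow_mul hM'.le, ← Real.rpow_neg_one]
      norm_num
    simp only [hqdef]
    rw [mul_pow, hsq]
    field_simp
  set A := E.filter fun ℓ => x ℓ = true
  set B := E.filter fun ℓ => ¬ x ℓ = true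
  have hAB : #A + #B = #E := card_filter_add_card_filter_not _
  have hlim : Real.exp (-(d ^ 2) * ((#E : ℝ) - (#A : ℝ))) * (1 - Real.exp (-(d ^ 2))) ^ #A =
      ∑ T ∈ A.powerset, (-1) ^ #T * Real.exp (-(d ^ 2)) ^ #(T ∪ B) := by
    have hE : (#E : ℝ) - (#A : ℝ) = #B := by
      rw [← hAB]
      push_cast
      ring
    rw [hE, mul_comm (-(d ^ 2)), Real.exp_nat_mul, sub_eq_neg_add,
      ← prod_const (s := A), prod_add_one, mul_sum]
    refine sum_congr rfl fun T hT => ?_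
    have hdisj : Disjoint T B :=
      disjoint_of_subset_left (mem_powerset.1 hT) (disjoint_filter_filter_not _ _ _)
    rw [card_union_of_disjoint hdisj, prod_const, neg_pow, pow_add]
    ring
  rw [hlim]
  have hsum : Tendsto (fun M : ℕ => ∑ T ∈ A.powerset, (-1) ^ #T * layerOff (T ∪ B) (q M) ^ M)
      atTop (nhds (∑ T ∈ A.powerset, (-1) ^ #T * Real.exp (-(d ^ 2)) ^ #(T ∪ B))) := by
    refine tendsto_finsetSum _ fun T hT => ?_
    have hsub : T ∪ B ⊆ E :=
      union_subset ((mem_powerset.1 hT).trans (filter_subset _ _)) (filter_subset _ _)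
    exact (tendsto_layerOff_pow _ (fun ℓ hℓ => hE1 ℓ (hsub hℓ))
      (fun ℓ hℓ h => hE2 ℓ (hsub hℓ) (hsub h)) _ hq hc).const_mul _
  refine hsum.congr' ?_
  filter_upwards [hq.eventually_le_const one_pos] with M hM
  have h0 : 0 ≤ q M := by
    simp only [hqdef]
    positivity
  convert (nodeμ_config_toReal M E x h0 hM).symm
end
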